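/- Let A be a ring such that the finitely presented right A-modules form an abelian category, and let χ be a subadditive function on the finitely presented A-modules. Then there exists an endofinite A-module M such that Adloc(χ) = Adloc(χ_M). -/

import Mathlib

/-- The composition length of a module (the length of a composition series,
zero if none exists). -/
noncomputable def compLength (R : Type) [Ring R] (M : Type) [AddCommGroup M] [Module R M] : ℕ := by
  classical
  exact if h : ∃ s : CompositionSeries (Submodule R M), s.head = ⊥ ∧ s.last = ⊤ then
    h.choose.length else 0

/-- A module `M` is endofinite if it has finite composition length over its
endomorphism ring, which acts on `M` by application. -/
def IsEndofinite (A : Type) [Ring A] (M : Type) [AddCommGroup M] [Module A M] : Prop :=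
  IsFiniteLength (Module.End A M) M

/-- The subadditive function `χ_M` associated to a module `M`:
`χ_M(X) = ℓ_{End_A(M)} Hom_A(X, M)`, where `End_A(M)` acts by postcomposition. -/
noncomputable def chiMod (A : Type) [Ring A] (M : Type) [AddCommGroup M] [Module A M]
    (X : Type) [AddCommGroup X] [Module A X] : ℕ :=
  compLength (Module.End A M) (X →ₗ[A] M)

/-- A subadditive function on the finitely presented `A`-modules: it depends only on
the isomorphism class, is additive on direct sums, and satisfies
`χ(X) + χ(Z) ≥ χ(Y)` for every exact sequence `X → Y → Z → 0`. -/
def IsSubadditive (A : Type) [Ring A]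
    (χ : (X : Type) → [AddCommGroup X] → [Module A X] → ℕ) : Prop :=
  (∀ (X Y : Type) [AddCommGroup X] [Module A X] [AddCommGroup Y] [Module A Y],
      Module.FinitePresentation A X → Module.FinitePresentation A Y →
      (X ≃ₗ[A] Y) → χ X = χ Y) ∧
  (∀ (X Y : Type) [AddCommGroup X] [Module A X] [AddCommGroup Y] [Module A Y],
      Module.FinitePresentation A X → Module.FinitePresentation A Y →
      χ (X × Y) = χ X + χ Y) ∧
  (∀ (X Y Z : Type) [AddCommGroup X] [Module A X] [AddCommGroup Y] [Module A Y]
      [AddCommGroup Z] [Module A Z],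
      Module.FinitePresentation A X → Module.FinitePresentation A Y →
      Module.FinitePresentation A Z →
      ∀ (f : X →ₗ[A] Y) (g : Y →ₗ[A] Z),
      Function.Exact f g → Function.Surjective g → χ Y ≤ χ X + χ Z)

/-- Membership in the additive locus `Adloc(χ)`: `Z` is finitely presented and
`χ(X) - χ(Y) + χ(Z) = 0` for every short exact sequence `0 → X → Y → Z → 0` of
finitely presented modules. -/
def MemAdloc (A : Type) [Ring A]
    (χ : (X : Type) → [AddCommGroup X] → [Module A X] → ℕ)
    (Z : Type) [AddCommGroup Z] [Module A Z] : Prop :=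
  Module.FinitePresentation A Z ∧
  ∀ (X Y : Type) [AddCommGroup X] [Module A X] [AddCommGroup Y] [Module A Y],
    Module.FinitePresentation A X → Module.FinitePresentation A Y →
    ∀ (f : X →ₗ[A] Y) (g : Y →ₗ[A] Z),
    Function.Injective f → Function.Exact f g → Function.Surjective g →
    χ X + χ Z = χ Y

/-- The hypothesis that the finitely presented `A`-modules form an abelian category:
kernels of maps between finitely presented modules are finitely presented. -/
def FpAbelian (A : Type) [Ring A] : Prop :=
  ∀ (X Y : Type) [AddCommGroup X] [Module A X] [AddCommGroup Y] [Module A Y],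
    Module.FinitePresentation A X → Module.FinitePresentation A Y →
    ∀ f : X →ₗ[A] Y, Module.FinitePresentation A (LinearMap.ker f)

section basics

variable {A : Type} [Ring A]

theorem exists_factor {X Y Z : Type} [AddCommGroup X] [Module A X] [AddCommGroup Y] [Module A Y]
    [AddCommGroup Z] [Module A Z] (π : X →ₗ[A] Y) (hπ : Function.Surjective π) (g : X →ₗ[A] Z)
    (h : ∀ x, π x = 0 → g x = 0) : ∃ g' : Y →ₗ[A] Z, ∀ x, g' (π x) = g x := by
  refine ⟨(LinearMap.ker π).liftQ g (fun x hx => h x hx) ∘ₗ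
    (π.quotKerEquivOfSurjective hπ).symm.toLinearMap, fun x => ?_⟩
  have : (π.quotKerEquivOfSurjective hπ).symm (π x) = (LinearMap.ker π).mkQ x := by
    rw [LinearEquiv.symm_apply_eq]; rfl
  rw [LinearMap.comp_apply, LinearEquiv.coe_coe, this]
  rfl

theorem fp_quot {Y : Type} [AddCommGroup Y] [Module A Y] [Module.FinitePresentation A Y]
    (N : Submodule A Y) (hN : N.FG) : Module.FinitePresentation A (Y ⧸ N) :=
  Module.finitePresentation_of_surjective N.mkQ N.mkQ_surjective (by simpa using hN)

theorem fp_quot_range {X Y : Type} [AddCommGroup X] [Module A X] [AddCommGroup Y] [Module A Y]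
    [Module.Finite A X] [Module.FinitePresentation A Y]
    (f : X →ₗ[A] Y) : Module.FinitePresentation A (Y ⧸ LinearMap.range f) :=
  fp_quot _ (by
    rw [LinearMap.range_eq_map]; exact (Module.Finite.fg_top).map f)

/-- Maps along which modules in the definable class are injective. -/
def InSig (χ : (X : Type) → [AddCommGroup X] → [Module A X] → ℕ) {X Y : Type}
    [AddCommGroup X] [Module A X] [AddCommGroup Y] [Module A Y] (f : X →ₗ[A] Y) : Prop :=
  χ X + χ (Y ⧸ LinearMap.range f) = χ Y

variable {χ : (X : Type) → [AddCommGroup X] → [Module A X] → ℕ} (hχ : IsSubadditive A χ)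

variable {X Y Z W : Type} [AddCommGroup X] [Module A X] [AddCommGroup Y] [Module A Y]
  [AddCommGroup Z] [Module A Z] [AddCommGroup W] [Module A W]
  [Module.FinitePresentation A X] [Module.FinitePresentation A Y]
  [Module.FinitePresentation A Z] [Module.FinitePresentation A W]

include hχ

theorem chi_equiv (e : X ≃ₗ[A] Y) : χ X = χ Y := hχ.1 X Y ‹_› ‹_› e

theorem chi_prod : χ (X × Y) = χ X + χ Y := hχ.2.1 X Y ‹_› ‹_›

theorem chi_exact (f : X →ₗ[A] Y) (g : Y →ₗ[A] Z) (h : Function.Exact f g)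
    (hg : Function.Surjective g) : χ Y ≤ χ X + χ Z := hχ.2.2 X Y Z ‹_› ‹_› ‹_› f g h hg

theorem chi_zero : χ PUnit = 0 := by
  have h := chi_prod hχ (X := PUnit) (Y := PUnit)
  have h2 := chi_equiv hχ (X := PUnit × PUnit) (Y := PUnit)
    { toFun := fun _ => PUnit.unit, invFun := fun _ => 0, left_inv := fun _ => rfl,
      right_inv := fun _ => rfl, map_add' := fun _ _ => rfl, map_smul' := fun _ _ => rfl }
  omega

theorem chi_sub [Subsingleton X] : χ X = 0 := by
  rw [← chi_zero hχ]
  exact chi_equiv hχ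
    { toFun := fun _ => PUnit.unit, invFun := fun _ => 0, left_inv := fun _ => Subsingleton.elim _ _,
      right_inv := fun _ => rfl, map_add' := fun _ _ => rfl, map_smul' := fun _ _ => rfl }

theorem chi_surj (f : X →ₗ[A] Y) (h : Function.Surjective f) : χ Y ≤ χ X := by
  have := chi_exact hχ f (0 : Y →ₗ[A] PUnit) (fun y => by simpa using h y)
    (fun z => ⟨0, rfl⟩)
  rw [chi_zero hχ] at this
  simpa using this

theorem chi_range (f : X →ₗ[A] Y) : χ Y ≤ χ X + χ (Y ⧸ LinearMap.range f) := by
  have := fp_quot_range f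
  exact chi_exact hχ f (LinearMap.range f).mkQ
    (LinearMap.exact_iff.2 (by simp)) (Submodule.mkQ_surjective _)

theorem inSig_iff (f : X →ₗ[A] Y) (g : Y →ₗ[A] Z) (h : Function.Exact f g)
    (hg : Function.Surjective g) : InSig χ f ↔ χ X + χ Z = χ Y := by
  have := fp_quot_range f
  have : χ (Y ⧸ LinearMap.range f) = χ Z := by
    apply chi_equiv hχ
    exact (Submodule.quotEquivOfEq _ _ (LinearMap.exact_iff.1 h).symm).trans
      (g.quotKerEquivOfSurjective hg)
  rw [InSig, this]

theorem inSig_id : InSig χ (LinearMap.id : X →ₗ[A] X) := by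
  rw [inSig_iff hχ _ (0 : X →ₗ[A] PUnit) (fun y => by simp) (fun z => ⟨0, rfl⟩), chi_zero hχ]
  simp

omit hχ
omit [Module.FinitePresentation A X] [Module.FinitePresentation A Y]
  [Module.FinitePresentation A W] in
theorem exact_cancel (f : X →ₗ[A] Y) (h : Y →ₗ[A] W) :
    ∃ g : W × (Y ⧸ LinearMap.range f) →ₗ[A] (W ⧸ LinearMap.range (h ∘ₗ f)),
      Function.Exact (h.prod (LinearMap.range f).mkQ) g ∧ Function.Surjective g := by
  refine ⟨LinearMap.coprod (Submodule.mkQ _)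
    (-(Submodule.mapQ (LinearMap.range f) (LinearMap.range (h ∘ₗ f)) h ?_)), ?_, ?_⟩
  · rintro _ ⟨x, rfl⟩
    exact ⟨x, rfl⟩
  · rintro ⟨w, y⟩
    obtain ⟨y, rfl⟩ := Submodule.mkQ_surjective _ y
    constructor
    · intro hh
      have : (LinearMap.range (h ∘ₗ f)).mkQ (w - h y) = 0 := by
        simpa [sub_eq_add_neg] using hh
      rw [Submodule.mkQ_apply, Submodule.Quotient.mk_eq_zero] at this
      obtain ⟨x, hx⟩ := this
      refine ⟨y + f x, ?_⟩
      ext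
      · simp at hx ⊢; rw [hx]; abel
      · simp
    · rintro ⟨y', hy⟩
      rw [← hy]
      simp
  · intro w
    obtain ⟨w, rfl⟩ := Submodule.mkQ_surjective _ w
    exact ⟨(w, 0), by simp⟩
include hχ

theorem sig_cancel (f : X →ₗ[A] Y) (h : Y →ₗ[A] W) (hs : InSig χ (h ∘ₗ f)) : InSig χ f := by
  have := fp_quot_range f
  have := fp_quot_range (h ∘ₗ f)
  obtain ⟨g, hg, hg'⟩ := exact_cancel f h
  have h1 := chi_exact hχ _ _ hg hg'
  rw [chi_prod hχ] at h1
  have h2 := chi_range hχ f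
  unfold InSig at *
  omega

theorem sig_comp (f : X →ₗ[A] Y) (g : Y →ₗ[A] W) (hf : InSig χ f) (hg : InSig χ g) :
    InSig χ (g ∘ₗ f) := by
  have := fp_quot_range f
  have := fp_quot_range g
  have := fp_quot_range (g ∘ₗ f)
  have hle : LinearMap.range (g ∘ₗ f) ≤ LinearMap.range g := LinearMap.range_comp_le_range f g
  have h1 := chi_exact hχ (Submodule.mapQ (LinearMap.range f) (LinearMap.range (g ∘ₗ f)) g
    (by rintro _ ⟨x, rfl⟩; exact ⟨x, rfl⟩)) (Submodule.factor hle) (by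
      intro w
      obtain ⟨w, rfl⟩ := Submodule.mkQ_surjective _ w
      constructor
      · intro h
        have : (Submodule.Quotient.mk w : W ⧸ LinearMap.range g) = 0 := by simpa using h
        rw [Submodule.Quotient.mk_eq_zero] at this
        obtain ⟨y, rfl⟩ := this
        exact ⟨Submodule.Quotient.mk y, by simp⟩
      · rintro ⟨y, hy⟩
        obtain ⟨y, rfl⟩ := Submodule.mkQ_surjective _ y
        rw [← hy]
        simp) (Submodule.factor_surjective hle)
  have h2 := chi_range hχ (g ∘ₗ f)
  unfold InSig at *
  omega

omit hχ
omit [Module.FinitePresentation A X] [Module.FinitePresentation A Y]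
  [Module.FinitePresentation A W] in
theorem exact_pushout (f : X →ₗ[A] Y) (a : X →ₗ[A] W) :
    ∃ g : ((W × Y) ⧸ LinearMap.range (a.prod (-f))) →ₗ[A] (Y ⧸ LinearMap.range f),
      Function.Exact ((LinearMap.range (a.prod (-f))).mkQ ∘ₗ LinearMap.inl A W Y) g ∧
        Function.Surjective g := by
  refine ⟨(LinearMap.range (a.prod (-f))).liftQ
    ((LinearMap.range f).mkQ ∘ₗ LinearMap.snd A W Y) ?_, ?_, ?_⟩
  · rintro _ ⟨x, rfl⟩
    simp
  · intro p
    obtain ⟨⟨w, y⟩, rfl⟩ := Submodule.mkQ_surjective _ p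
    constructor
    · intro h
      have : (Submodule.Quotient.mk y : Y ⧸ LinearMap.range f) = 0 := by simpa using h
      rw [Submodule.Quotient.mk_eq_zero] at this
      obtain ⟨x, rfl⟩ := this
      refine ⟨w + a x, ?_⟩
      rw [← sub_eq_zero, LinearMap.comp_apply, ← map_sub, Submodule.mkQ_apply,
        Submodule.Quotient.mk_eq_zero]
      exact ⟨x, by simp⟩
    · rintro ⟨y', hy⟩
      rw [← hy]
      simp
  · intro w
    obtain ⟨w, rfl⟩ := Submodule.mkQ_surjective _ w
    exact ⟨Submodule.mkQ _ (0, w), by simp⟩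
include hχ

theorem sig_pushout (f : X →ₗ[A] Y) (a : X →ₗ[A] W) (hf : InSig χ f) :
    InSig χ ((LinearMap.range (a.prod (-f))).mkQ ∘ₗ LinearMap.inl A W Y) := by
  have := fp_quot_range f
  have := fp_quot_range (a.prod (-f))
  have h1 := chi_range hχ (a.prod (-f))
  rw [chi_prod hχ] at h1
  obtain ⟨g, hg, hg'⟩ := exact_pushout f a
  have h3 := chi_exact hχ _ _ hg hg'
  rw [inSig_iff hχ _ _ hg hg']
  unfold InSig at *
  omega

omit [Module.FinitePresentation A X] [Module.FinitePresentation A Y]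
  [Module.FinitePresentation A Z] [Module.FinitePresentation A W] in
theorem chi_pi (ι : Type) [Fintype ι] : ∀ (X : ι → Type) [∀ i, AddCommGroup (X i)]
    [∀ i, Module A (X i)] [∀ i, Module.FinitePresentation A (X i)],
    χ (∀ i, X i) = ∑ i, χ (X i) := by
  classical
  refine Fintype.induction_empty_option (P := fun ι _ => ∀ (X : ι → Type) [∀ i, AddCommGroup (X i)]
    [∀ i, Module A (X i)] [∀ i, Module.FinitePresentation A (X i)],
    χ (∀ i, X i) = ∑ i, χ (X i)) ?_ ?_ ?_ ι
  · intro α β _ e ih X _ _ _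
    let _ := Fintype.ofEquiv β e.symm
    rw [← chi_equiv hχ (LinearEquiv.piCongrLeft A X e), ih, ← e.sum_comp]
  · intro X _ _ _
    rw [chi_sub hχ]
    simp
  · intro α _ ih X _ _ _
    rw [chi_equiv hχ (LinearEquiv.piOptionEquivProd A), chi_prod hχ, ih, Fintype.sum_option]

omit [Module.FinitePresentation A X] [Module.FinitePresentation A Y]
  [Module.FinitePresentation A Z] [Module.FinitePresentation A W] in
theorem sig_pi (ι : Type) [Fintype ι] (X Y : ι → Type) [∀ i, AddCommGroup (X i)]
    [∀ i, Module A (X i)] [∀ i, Module.FinitePresentation A (X i)] [∀ i, AddCommGroup (Y i)]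
    [∀ i, Module A (Y i)] [∀ i, Module.FinitePresentation A (Y i)]
    (f : ∀ i, X i →ₗ[A] Y i) (hf : ∀ i, InSig χ (f i)) :
    InSig χ (LinearMap.pi (fun i => f i ∘ₗ LinearMap.proj i)) := by
  have := fun i => fp_quot_range (f i)
  rw [inSig_iff hχ (Z := ∀ i, (Y i ⧸ LinearMap.range (f i))) _
    (LinearMap.pi (fun i => (LinearMap.range (f i)).mkQ ∘ₗ LinearMap.proj i))]
  · rw [chi_pi hχ, chi_pi hχ, chi_pi hχ, ← Finset.sum_add_distrib]
    exact Finset.sum_congr rfl fun i _ => hf i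
  · intro y
    constructor
    · intro h
      have : ∀ i, ∃ x, f i x = y i := by
        intro i
        have h := congrFun h i
        simpa using h
      choose x hx using this
      exact ⟨x, by ext i; simp [hx]⟩
    · rintro ⟨x, rfl⟩
      ext i
      simp
  · intro z
    choose y hy using fun i => Submodule.mkQ_surjective _ (z i)
    exact ⟨y, by ext i; simpa using hy i⟩

end basics
section good

variable {A : Type} [Ring A]
variable (χ : (X : Type) → [AddCommGroup X] → [Module A X] → ℕ)

/-- Every finitely presented factorization of `u` starts with a map in the class. -/
def Good {X₀ W : Type} [AddCommGroup X₀] [Module A X₀] [AddCommGroup W] [Module A W]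
    (u : X₀ →ₗ[A] W) : Prop :=
  ∀ (V : Type) [AddCommGroup V] [Module A V], Module.FinitePresentation A V →
    ∀ (v : X₀ →ₗ[A] V) (b : V →ₗ[A] W), b ∘ₗ v = u → InSig χ v

/-- Injectivity with respect to all maps in the class. -/
def SigInj (M : Type) [AddCommGroup M] [Module A M] : Prop :=
  ∀ (X Y : Type) [AddCommGroup X] [Module A X] [AddCommGroup Y] [Module A Y],
    Module.FinitePresentation A X → Module.FinitePresentation A Y →
    ∀ f : X →ₗ[A] Y, InSig χ f → ∀ a : X →ₗ[A] M, ∃ b : Y →ₗ[A] M, b ∘ₗ f = a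

variable {χ} (hχ : IsSubadditive A χ)

include hχ in
theorem good_id {X₀ : Type} [AddCommGroup X₀] [Module A X₀] [Module.FinitePresentation A X₀] :
    Good χ (LinearMap.id : X₀ →ₗ[A] X₀) := by
  intro V _ _ hV v b hb
  refine sig_cancel hχ v b ?_
  rw [hb]
  exact inSig_id hχ

/-- The big gluing map. -/
noncomputable def glue {W : Type} [AddCommGroup W] [Module A W] {J : Type} {X Y : J → Type}
    [∀ j, AddCommGroup (X j)] [∀ j, Module A (X j)]
    [∀ j, AddCommGroup (Y j)] [∀ j, Module A (Y j)]
    (f : ∀ j, X j →ₗ[A] Y j) (a : ∀ j, X j →ₗ[A] W) :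
    (Π₀ j, X j) →ₗ[A] W × (Π₀ j, Y j) :=
  letI := Classical.decEq J
  (DFinsupp.lsum ℕ a).prod (-(DFinsupp.mapRange.linearMap f))

include hχ in
theorem good_step {X₀ W : Type} [AddCommGroup X₀] [Module A X₀] [AddCommGroup W] [Module A W]
    [Module.FinitePresentation A X₀] (u : X₀ →ₗ[A] W) (hu : Good χ u)
    {J : Type} {X Y : J → Type}
    [∀ j, AddCommGroup (X j)] [∀ j, Module A (X j)]
    [∀ j, AddCommGroup (Y j)] [∀ j, Module A (Y j)]
    [∀ j, Module.FinitePresentation A (X j)] [∀ j, Module.FinitePresentation A (Y j)]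
    (f : ∀ j, X j →ₗ[A] Y j) (hf : ∀ j, InSig χ (f j)) (a : ∀ j, X j →ₗ[A] W) :
    Good χ ((LinearMap.range (glue f a)).mkQ ∘ₗ LinearMap.inl A W _ ∘ₗ u) := by
  classical
  intro V _ _ hV v b hb
  obtain ⟨n, π', hπ'⟩ := Module.Finite.exists_fin' A V
  obtain ⟨w, hw⟩ := Module.projective_lifting_property (LinearMap.range (glue f a)).mkQ
    (b ∘ₗ π') (Submodule.mkQ_surjective _)
  let π : X₀ × (Fin n → A) →ₗ[A] V := v.coprod π'
  have hπ : Function.Surjective π := fun x => by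
    obtain ⟨y, hy⟩ := hπ' x
    exact ⟨(0, y), by simp [π, hy]⟩
  let ψ : X₀ × (Fin n → A) →ₗ[A] W × (Π₀ j, Y j) := (LinearMap.inl A W _ ∘ₗ u).coprod w
  have hψ : ∀ q, (LinearMap.range (glue f a)).mkQ (ψ q) = b (π q) := by
    rintro ⟨x, y⟩
    have h1 := LinearMap.congr_fun hw y
    have h2 := LinearMap.congr_fun hb x
    simp only [LinearMap.comp_apply] at h1 h2
    simp only [ψ, π, LinearMap.coprod_apply, map_add, LinearMap.comp_apply]
    rw [h1, ← h2]
  have hR := Module.FinitePresentation.fg_ker π hπ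
  obtain ⟨R, hR⟩ := hR
  have hx : ∀ r : R, ∃ x, glue f a x = ψ r := by
    intro r
    have : (r : X₀ × (Fin n → A)) ∈ LinearMap.ker π := by
      rw [← hR]; exact Submodule.subset_span r.2
    have h1 := hψ r
    rw [LinearMap.mem_ker.1 this, map_zero, Submodule.mkQ_apply,
      Submodule.Quotient.mk_eq_zero] at h1
    exact h1
  choose x hx using hx
  let F : Finset J := Finset.univ.biUnion (fun r : R => (x r).support)
  let XF := ∀ j : F, X j
  let YF := ∀ j : F, Y j
  let fF : XF →ₗ[A] YF := LinearMap.pi (fun j => f j ∘ₗ LinearMap.proj j)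
  have hfF : InSig χ fF := sig_pi hχ F _ _ _ (fun j => hf j)
  let aF : XF →ₗ[A] W := ∑ j : F, a j ∘ₗ LinearMap.proj j
  let xF : R → XF := fun r j => x r j
  have haF : ∀ r, aF (xF r) = (ψ r).1 := by
    intro r
    rw [← hx r]
    simp only [aF, xF, glue, LinearMap.prod_apply, LinearMap.sum_apply, LinearMap.comp_apply,
      Function.prod]
    rw [DFinsupp.lsum_apply_apply, DFinsupp.sumAddHom_apply, DFinsupp.sum]
    rw [Finset.sum_subset (s₂ := F)]
    · rw [← Finset.sum_coe_sort F]
      rfl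
    · intro j hj
      exact Finset.mem_biUnion.2 ⟨r, Finset.mem_univ _, hj⟩
    · intro j _ hj
      have : x r j = 0 := by simpa using hj
      simp [this]
  have hfF' : ∀ r : R, ∀ j : F, (ψ r).2 j = - fF (xF r) j := by
    intro r j
    rw [← hx r]
    simp [glue, fF, xF]
    rfl
  let prY : (Π₀ j, Y j) →ₗ[A] YF := LinearMap.pi (fun j => DFinsupp.lapply (j : J))
  -- the finitely presented approximation
  let N : Submodule A (XF × (X₀ × (Fin n → A))) :=
    Submodule.span A (Set.range fun r : R => (-(xF r), (r : X₀ × (Fin n → A))))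
  have hN : N.FG := Submodule.fg_span (Set.finite_range _)
  have : Module.FinitePresentation A ((XF × (X₀ × (Fin n → A))) ⧸ N) := fp_quot N hN
  let u' : X₀ →ₗ[A] ((XF × (X₀ × (Fin n → A))) ⧸ N) :=
    N.mkQ ∘ₗ LinearMap.inr A _ _ ∘ₗ LinearMap.inl A _ _
  have hu' : InSig χ u' := by
    refine hu _ this u' (N.liftQ (aF.coprod (LinearMap.fst A _ _ ∘ₗ ψ)) ?_) ?_
    · rw [Submodule.span_le]
      rintro _ ⟨r, rfl⟩
      simp [haF]
    · ext x
      simp [u', ψ]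
  let α : XF →ₗ[A] ((XF × (X₀ × (Fin n → A))) ⧸ N) := N.mkQ ∘ₗ LinearMap.inl A _ _
  have hpo := sig_pushout hχ fF α hfF
  have := fp_quot_range (α.prod (-fF))
  have hcomp := sig_comp hχ _ _ hu' hpo
  obtain ⟨c, hc⟩ := exists_factor π hπ ((LinearMap.range (α.prod (-fF))).mkQ ∘ₗ
    ((N.mkQ ∘ₗ LinearMap.inr A _ _).prod (prY ∘ₗ LinearMap.snd A _ _ ∘ₗ ψ))) (by
      intro q hq
      replace hq : q ∈ Submodule.span A (R : Set (X₀ × (Fin n → A))) := by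
        rw [hR]; exact hq
      rw [← LinearMap.mem_ker]
      revert q
      change Submodule.span A (R : Set (X₀ × (Fin n → A))) ≤ _
      rw [Submodule.span_le]
      intro r hr
      rw [SetLike.mem_coe, LinearMap.mem_ker, LinearMap.comp_apply, Submodule.mkQ_apply,
        Submodule.Quotient.mk_eq_zero]
      refine ⟨xF ⟨r, hr⟩, ?_⟩
      ext1
      · change N.mkQ _ = N.mkQ _
        rw [← sub_eq_zero, ← map_sub, Submodule.mkQ_apply, Submodule.Quotient.mk_eq_zero,
          ← neg_mem_iff]
        refine Submodule.subset_span ⟨⟨r, hr⟩, ?_⟩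
        ext1 <;> simp
      · ext j
        exact (hfF' ⟨r, hr⟩ j).symm)
  refine sig_cancel hχ v c ?_
  convert hcomp using 1
  ext x
  have := hc (x, 0)
  simp only [π, LinearMap.coprod_apply, map_zero, add_zero] at this
  rw [LinearMap.comp_apply, this]
  simp [u', ψ]

end good
section seqlimit

variable {A : Type} [Ring A] (G : ℕ → Type) [∀ n, AddCommGroup (G n)] [∀ n, Module A (G n)]
  (s : ∀ n, G n →ₗ[A] G (n + 1))

/-- Transition maps of a sequence. -/
def seqTr (i j : ℕ) (h : i ≤ j) : G i →ₗ[A] G j :=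
  Nat.leRec (motive := fun j _ => G i →ₗ[A] G j) LinearMap.id (fun k _ g => s k ∘ₗ g) h

theorem seqTr_self (i : ℕ) : seqTr G s i i le_rfl = LinearMap.id := Nat.leRec_self _ _

theorem seqTr_succ (i j : ℕ) (h : i ≤ j) :
    seqTr G s i (j + 1) (Nat.le_succ_of_le h) = s j ∘ₗ seqTr G s i j h := Nat.leRec_succ _ _ _

instance seqTr_directed : DirectedSystem G (fun i j h => seqTr G s i j h) where
  map_self i x := by rw [seqTr_self]; rfl
  map_map k j i hij hjk x := by
    induction k, hjk using Nat.le_induction with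
    | base => rw [seqTr_self]; rfl
    | succ k hk ih =>
      rw [seqTr_succ G s j k hk, seqTr_succ G s i k (hij.trans hk), LinearMap.comp_apply,
        LinearMap.comp_apply, ih]

theorem seqLim_lift (X : Type) [AddCommGroup X] [Module A X] [Module.FinitePresentation A X]
    (a : X →ₗ[A] Module.DirectLimit G (seqTr G s)) :
    ∃ n, ∃ a' : X →ₗ[A] G n, Module.DirectLimit.of A ℕ G (seqTr G s) n ∘ₗ a' = a := by
  obtain ⟨k, π, hπ⟩ := Module.Finite.exists_fin' A X
  have hker := Module.FinitePresentation.fg_ker π hπ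
  choose i y hy using fun j : Fin k => Module.DirectLimit.exists_of (a (π (Pi.single j 1)))
  let N := Finset.univ.sup i
  have hN : ∀ j, i j ≤ N := fun j => Finset.le_sup (Finset.mem_univ j)
  let g : (Fin k → A) →ₗ[A] G N :=
    (Pi.basisFun A (Fin k)).constr ℕ (fun j => seqTr G s (i j) N (hN j) (y j))
  have hg : Module.DirectLimit.of A ℕ G (seqTr G s) N ∘ₗ g = a ∘ₗ π := by
    refine (Pi.basisFun A (Fin k)).ext fun j => ?_
    rw [LinearMap.comp_apply, Module.Basis.constr_basis, Module.DirectLimit.of_f, hy]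
    simp
  obtain ⟨R, hR⟩ := hker
  have hz : ∀ r : R, ∃ m, ∃ h : N ≤ m, seqTr G s N m h (g r) = 0 := by
    intro r
    apply Module.DirectLimit.of.zero_exact
    have h1 := LinearMap.congr_fun hg r
    have h2 : π r = 0 := by
      rw [← LinearMap.mem_ker, ← hR]; exact Submodule.subset_span r.2
    simpa [h2] using h1
  choose m hm hz using hz
  let m' := N ⊔ Finset.univ.sup m
  have hm' : ∀ r, m r ≤ m' := fun r => (Finset.le_sup (Finset.mem_univ r)).trans le_sup_right
  obtain ⟨a', ha'⟩ := exists_factor π hπ (seqTr G s N m' le_sup_left ∘ₗ g) (by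
    intro x hx
    rw [← LinearMap.mem_ker, ← hR] at hx
    rw [← LinearMap.mem_ker]
    revert x
    change Submodule.span A (R : Set (Fin k → A)) ≤ _
    rw [Submodule.span_le]
    intro r hr
    rw [SetLike.mem_coe, LinearMap.mem_ker, LinearMap.comp_apply]
    have := DirectedSystem.map_map (f := fun i j h => seqTr G s i j h)
      (hm ⟨r, hr⟩) (hm' ⟨r, hr⟩) (g r)
    rw [← this, hz ⟨r, hr⟩, map_zero])
  refine ⟨m', a', ?_⟩
  ext x
  obtain ⟨x, rfl⟩ := hπ x
  rw [LinearMap.comp_apply, ha', LinearMap.comp_apply, Module.DirectLimit.of_f]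
  exact LinearMap.congr_fun hg x

theorem seqLim_eq (X : Type) [AddCommGroup X] [Module A X] [Module.Finite A X] (n : ℕ)
    (a b : X →ₗ[A] G n) (h : Module.DirectLimit.of A ℕ G (seqTr G s) n ∘ₗ a =
      Module.DirectLimit.of A ℕ G (seqTr G s) n ∘ₗ b) :
    ∃ m, ∃ h : n ≤ m, seqTr G s n m h ∘ₗ a = seqTr G s n m h ∘ₗ b := by
  obtain ⟨R, hR⟩ := Module.Finite.fg_top (R := A) (M := X)
  have hz : ∀ r : R, ∃ m, ∃ h : n ≤ m, seqTr G s n m h (a r - b r) = 0 := by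
    intro r
    apply Module.DirectLimit.of.zero_exact
    have := LinearMap.congr_fun h r
    simpa [sub_eq_zero] using this
  choose m hm hz using hz
  let m' := n ⊔ Finset.univ.sup m
  have hm' : ∀ r, m r ≤ m' := fun r => (Finset.le_sup (Finset.mem_univ r)).trans le_sup_right
  refine ⟨m', le_sup_left, ?_⟩
  refine LinearMap.ext_on hR ?_
  intro r hr
  have := DirectedSystem.map_map (f := fun i j h => seqTr G s i j h)
      (hm ⟨r, hr⟩) (hm' ⟨r, hr⟩) (a r - b r)
  rw [hz ⟨r, hr⟩, map_zero] at this
  rw [LinearMap.comp_apply, LinearMap.comp_apply, ← sub_eq_zero, ← map_sub, ← this]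

end seqlimit

section small

variable {A : Type} [Ring A]
variable (χ : (X : Type) → [AddCommGroup X] → [Module A X] → ℕ)

variable (A) in
/-- A small family of representatives of maps of finitely presented modules. -/
structure SmallMap where
  n : ℕ
  m : ℕ
  R : Submodule A (Fin n → A)
  S : Submodule A (Fin m → A)
  hR : R.FG
  hS : S.FG
  f : ((Fin n → A) ⧸ R) →ₗ[A] ((Fin m → A) ⧸ S)

/-- source -/
abbrev SmallMap.src (s : SmallMap A) : Type := (Fin s.n → A) ⧸ s.R
/-- target -/
abbrev SmallMap.tgt (s : SmallMap A) : Type := (Fin s.m → A) ⧸ s.S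

instance (s : SmallMap A) : Module.FinitePresentation A s.src := fp_quot _ s.hR
instance (s : SmallMap A) : Module.FinitePresentation A s.tgt := fp_quot _ s.hS

variable {χ} (hχ : IsSubadditive A χ)

include hχ in
theorem sig_equiv {X Y X' Y' : Type} [AddCommGroup X] [Module A X] [AddCommGroup Y] [Module A Y]
    [AddCommGroup X'] [Module A X'] [AddCommGroup Y'] [Module A Y']
    [Module.FinitePresentation A X] [Module.FinitePresentation A Y]
    (eX : X ≃ₗ[A] X') (eY : Y ≃ₗ[A] Y') (f : X →ₗ[A] Y) :
    InSig χ (eY.toLinearMap ∘ₗ f ∘ₗ eX.symm.toLinearMap) ↔ InSig χ f := by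
  have := Module.FinitePresentation.of_equiv eX
  have := Module.FinitePresentation.of_equiv eY
  have := fp_quot_range f
  rw [inSig_iff hχ _ ((LinearMap.range f).mkQ ∘ₗ eY.symm.toLinearMap), InSig, chi_equiv hχ eX,
    chi_equiv hχ eY]
  · intro y
    obtain ⟨y, rfl⟩ := eY.surjective y
    constructor
    · intro h
      have : (Submodule.Quotient.mk y : Y ⧸ LinearMap.range f) = 0 := by simpa using h
      rw [Submodule.Quotient.mk_eq_zero] at this
      obtain ⟨x, rfl⟩ := this
      exact ⟨eX x, by simp⟩
    · rintro ⟨x, hx⟩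
      rw [← hx]
      simp
  · exact (Submodule.mkQ_surjective _).comp eY.symm.surjective

include hχ in
theorem exists_smallMap {X Y : Type} [AddCommGroup X] [Module A X] [AddCommGroup Y] [Module A Y]
    [Module.FinitePresentation A X] [Module.FinitePresentation A Y] (f : X →ₗ[A] Y) :
    ∃ (s : SmallMap A) (eX : X ≃ₗ[A] s.src) (eY : Y ≃ₗ[A] s.tgt),
      (InSig χ s.f ↔ InSig χ f) ∧ ∀ x, s.f (eX x) = eY (f x) := by
  obtain ⟨n, R, eX, hR⟩ := Module.FinitePresentation.exists_fin A X
  obtain ⟨m, S, eY, hS⟩ := Module.FinitePresentation.exists_fin A Y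
  exact ⟨⟨n, m, R, S, hR, hS, eY.toLinearMap ∘ₗ f ∘ₗ eX.symm.toLinearMap⟩, eX, eY,
    sig_equiv hχ eX eY f, fun x => by simp⟩

variable (A) in
/-- A bundled module. -/
structure Stage where
  W : Type
  [g : AddCommGroup W]
  [m : Module A W]

attribute [instance] Stage.g Stage.m

variable (χ) in
/-- Extension problems. -/
abbrev Prob (W : Stage A) : Type := Σ i : {s : SmallMap A // InSig χ s.f}, (i.1.src →ₗ[A] W.W)

variable (χ) in
/-- The next stage. -/
noncomputable def nextStage (W : Stage A) : Stage A where
  W := (W.W × (Π₀ j : Prob χ W, j.1.1.tgt)) ⧸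
    LinearMap.range (glue (X := fun j : Prob χ W => j.1.1.src) (Y := fun j : Prob χ W => j.1.1.tgt)
      (fun j : Prob χ W => j.1.1.f) (fun j => j.2))

variable (χ) in
/-- The map into the next stage. -/
noncomputable def stageMap (W : Stage A) : W.W →ₗ[A] (nextStage χ W).W :=
  Submodule.mkQ _ ∘ₗ LinearMap.inl A _ _

theorem glue_extend {W : Type} [AddCommGroup W] [Module A W] {J : Type} {X Y : J → Type}
    [∀ j, AddCommGroup (X j)] [∀ j, Module A (X j)]
    [∀ j, AddCommGroup (Y j)] [∀ j, Module A (Y j)]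
    (f : ∀ j, X j →ₗ[A] Y j) (a : ∀ j, X j →ₗ[A] W) (j : J) :
    ∃ b : Y j →ₗ[A] (W × (Π₀ j, Y j)) ⧸ LinearMap.range (glue f a),
      b ∘ₗ f j = ((LinearMap.range (glue f a)).mkQ ∘ₗ LinearMap.inl A _ _) ∘ₗ a j := by
  classical
  refine ⟨Submodule.mkQ _ ∘ₗ LinearMap.inr A _ _ ∘ₗ DFinsupp.lsingle j, ?_⟩
  refine LinearMap.ext fun x => ?_
  rw [← sub_eq_zero]
  simp only [LinearMap.comp_apply]
  rw [← map_sub, Submodule.mkQ_apply, Submodule.Quotient.mk_eq_zero, ← neg_mem_iff]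
  refine ⟨DFinsupp.single j x, ?_⟩
  unfold glue
  ext1
  · simp [DFinsupp.lsum_apply_apply, DFinsupp.sumAddHom_single]
  · simp

theorem stage_extend (W : Stage A) (s : SmallMap A) (hs : InSig χ s.f) (a : s.src →ₗ[A] W.W) :
    ∃ b : s.tgt →ₗ[A] (nextStage χ W).W, b ∘ₗ s.f = stageMap χ W ∘ₗ a :=
  glue_extend (X := fun j : Prob χ W => j.1.1.src) (Y := fun j : Prob χ W => j.1.1.tgt)
      (fun j : Prob χ W => j.1.1.f) (fun j => j.2) ⟨⟨s, hs⟩, a⟩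

variable (χ) in
/-- The sequence of stages. -/
noncomputable def stages (X₀ : Stage A) : ℕ → Stage A
  | 0 => X₀
  | n + 1 => nextStage χ (stages X₀ n)

include hχ in
theorem exists_sigInj (X₀ : Type) [AddCommGroup X₀] [Module A X₀] [Module.FinitePresentation A X₀] :
    ∃ (M : Type) (_ : AddCommGroup M) (_ : Module A M) (u : X₀ →ₗ[A] M),
      Good χ u ∧ SigInj χ M := by
  let St : ℕ → Stage A := stages χ ⟨X₀⟩
  let s : ∀ n, (St n).W →ₗ[A] (St (n + 1)).W := fun n => stageMap χ (St n)
  let u : ∀ n, X₀ →ₗ[A] (St n).W := fun n => seqTr (fun n => (St n).W) s 0 n (Nat.zero_le n)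
  have hu : ∀ n, Good χ (u n) := by
    intro n
    induction n with
    | zero =>
      change Good χ (seqTr (fun n => (St n).W) s 0 0 _)
      rw [seqTr_self]
      exact good_id hχ (X₀ := X₀)
    | succ n ih =>
      change Good χ (seqTr (fun n => (St n).W) s 0 (n + 1) _)
      rw [seqTr_succ (fun n => (St n).W) s 0 n (Nat.zero_le n)]
      exact good_step hχ (u n) ih (J := Prob χ (St n)) (X := fun j => j.1.1.src)
        (Y := fun j => j.1.1.tgt) _ (fun j => j.1.2) _
  refine ⟨Module.DirectLimit (fun n => (St n).W) (seqTr (fun n => (St n).W) s), inferInstance, inferInstance,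
    Module.DirectLimit.of A ℕ (fun n => (St n).W) (seqTr (fun n => (St n).W) s) 0, ?_, ?_⟩
  · intro V _ _ hV v b hb
    obtain ⟨n, b', rfl⟩ := seqLim_lift (fun n => (St n).W) s V b
    obtain ⟨m, hm, h⟩ := seqLim_eq (fun n => (St n).W) s X₀ n (b' ∘ₗ v) (u n) (by
      rw [← LinearMap.comp_assoc, hb]
      ext x
      exact (Module.DirectLimit.of_f).symm)
    refine hu m V hV v (seqTr (fun n => (St n).W) s n m hm ∘ₗ b') ?_
    rw [LinearMap.comp_assoc, h]
    ext x
    exact DirectedSystem.map_map (f := fun i j h => seqTr (fun n => (St n).W) s i j h) (Nat.zero_le n) hm x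
  · intro X Y _ _ _ _ hX hY f hf a
    obtain ⟨n, a', rfl⟩ := seqLim_lift (fun n => (St n).W) s X a
    obtain ⟨t, eX, eY, ht, hc⟩ := exists_smallMap hχ f
    obtain ⟨b, hb⟩ := stage_extend (St n) t (ht.2 hf) (a' ∘ₗ eX.symm.toLinearMap)
    refine ⟨Module.DirectLimit.of A ℕ (fun n => (St n).W) (seqTr (fun n => (St n).W) s) (n + 1) ∘ₗ b ∘ₗ eY.toLinearMap, ?_⟩
    refine LinearMap.ext fun x => ?_
    have h1 := LinearMap.congr_fun hb (eX x)
    simp only [LinearMap.comp_apply, LinearEquiv.coe_coe, hc, LinearEquiv.symm_apply_apply] at h1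
    have h2 := Module.DirectLimit.of_f (R := A) (G := (fun n => (St n).W))
      (f := seqTr (fun n => (St n).W) s) (hij := Nat.le_succ n) (x := a' x)
    have h3 := seqTr_succ (fun n => (St n).W) s n n le_rfl
    rw [seqTr_self] at h3
    refine Eq.trans (congrArg (Module.DirectLimit.of A ℕ (fun n => (St n).W)
      (seqTr (fun n => (St n).W) s) (n + 1)) ?_) h2
    exact h1.trans (LinearMap.congr_fun h3 (a' x)).symm

end small
section pp

variable {A : Type} [Ring A] (M : Type) [AddCommGroup M] [Module A M]

/-- pp-definable subgroups, as submodules over the endomorphism ring. -/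
def ppSub {Y : Type} [AddCommGroup Y] [Module A Y] (y : Y) : Submodule (Module.End A M) M where
  carrier := {m | ∃ h : Y →ₗ[A] M, h y = m}
  zero_mem' := ⟨0, rfl⟩
  add_mem' := by
    rintro _ _ ⟨h, rfl⟩ ⟨h', rfl⟩
    exact ⟨h + h', rfl⟩
  smul_mem' := by
    rintro e _ ⟨h, rfl⟩
    exact ⟨e ∘ₗ h, rfl⟩

variable {M}

theorem mem_ppSub {Y : Type} [AddCommGroup Y] [Module A Y] (y : Y) (m : M) :
    m ∈ ppSub (A := A) M y ↔ ∃ h : Y →ₗ[A] M, h y = m := Iff.rfl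

theorem mem_ppSub_mk {Y ι : Type} [AddCommGroup Y] [Module A Y] (y : ι → Y) (z : Y) (m : M) :
    m ∈ ppSub (A := A) M ((Submodule.span A (Set.range y)).mkQ z) ↔
      ∃ c : Y →ₗ[A] M, (∀ i, c (y i) = 0) ∧ c z = m := by
  constructor
  · rintro ⟨h, rfl⟩
    refine ⟨h ∘ₗ Submodule.mkQ _, fun i => ?_, rfl⟩
    have : (Submodule.span A (Set.range y)).mkQ (y i) = 0 := by
      rw [Submodule.mkQ_apply, Submodule.Quotient.mk_eq_zero]
      exact Submodule.subset_span ⟨i, rfl⟩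
    rw [LinearMap.comp_apply, this, map_zero]
  · rintro ⟨c, hc, rfl⟩
    refine ⟨(Submodule.span A (Set.range y)).liftQ c ?_, rfl⟩
    rw [Submodule.span_le]
    rintro _ ⟨i, rfl⟩
    exact hc i

theorem exists_conj {Y Y' : Type} [AddCommGroup Y] [Module A Y] [AddCommGroup Y'] [Module A Y']
    [Module.FinitePresentation A Y] [Module.FinitePresentation A Y'] (y : Y) (y' : Y') :
    ∃ (Y'' : Type) (_ : AddCommGroup Y'') (_ : Module A Y'') (_ : Module.FinitePresentation A Y'')
      (i : Y →ₗ[A] Y'') (i' : Y' →ₗ[A] Y''), i y = i' y' ∧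
      ∀ (h : Y →ₗ[A] M) (h' : Y' →ₗ[A] M), h y = h' y' →
        ∃ h'' : Y'' →ₗ[A] M, h'' ∘ₗ i = h ∧ h'' ∘ₗ i' = h' := by
  let N : Submodule A (Y × Y') := Submodule.span A {(y, -y')}
  refine ⟨(Y × Y') ⧸ N, inferInstance, inferInstance,
    fp_quot N (Submodule.fg_span (Set.finite_singleton _)),
    N.mkQ ∘ₗ LinearMap.inl A _ _, N.mkQ ∘ₗ LinearMap.inr A _ _, ?_, ?_⟩
  · rw [← sub_eq_zero, LinearMap.comp_apply, LinearMap.comp_apply, ← map_sub, Submodule.mkQ_apply,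
      Submodule.Quotient.mk_eq_zero]
    exact Submodule.subset_span (by simp)
  · intro h h' hh
    refine ⟨N.liftQ (h.coprod h') ?_, ?_, ?_⟩
    · rw [Submodule.span_le]
      simp [hh]
    · ext; simp
    · ext; simp

variable (M) in
/-- being pp-definable -/
def IsPP (P : Submodule (Module.End A M) M) : Prop :=
  ∃ (Y : Type) (_ : AddCommGroup Y) (_ : Module A Y) (_ : Module.FinitePresentation A Y) (y : Y),
    ppSub (A := A) M y = P

/-- Partial maps preserving pp-formulas. -/
def PPres (p : M →ₗ.[A] M) : Prop :=
  ∀ (Y : Type) [AddCommGroup Y] [Module A Y], Module.FinitePresentation A Y →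
    ∀ (ι : Type) [Finite ι] (y : ι → Y) (b : Y →ₗ[A] M) (hb : ∀ i, b (y i) ∈ p.domain),
      ∃ c : Y →ₗ[A] M, ∀ i, c (y i) = p ⟨b (y i), hb i⟩

/-- One point extension condition. -/
def PExt (p : M →ₗ.[A] M) (m n : M) : Prop :=
  ∀ (Y : Type) [AddCommGroup Y] [Module A Y], Module.FinitePresentation A Y →
    ∀ (ι : Type) [Finite ι] (y : ι → Y) (z : Y) (b : Y →ₗ[A] M) (hb : ∀ i, b (y i) ∈ p.domain),
      b z = m → ∃ c : Y →ₗ[A] M, (∀ i, c (y i) = p ⟨b (y i), hb i⟩) ∧ c z = n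

theorem pext_extend (p : M →ₗ.[A] M) (m n : M) (h : PExt p m n) :
    ∃ q : M →ₗ.[A] M, p ≤ q ∧ PPres q ∧ ∃ hm : m ∈ q.domain, q ⟨m, hm⟩ = n := by
  have key : ∀ (a : A) (ha : a • m ∈ p.domain), p ⟨a • m, ha⟩ = a • n := by
    intro a ha
    obtain ⟨c, hc, hc'⟩ := h A inferInstance Unit (fun _ => a) 1 (LinearMap.toSpanSingleton A M m)
      (fun _ => by simpa using ha) (by simp)
    have := hc ()
    simp only [LinearMap.toSpanSingleton_apply] at this
    rw [← this, ← hc', ← map_smul, smul_eq_mul, mul_one]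
  have H : ∀ a : A, a • m = 0 → a • n = 0 := by
    intro a ha
    rw [← key a (by rw [ha]; exact zero_mem _)]
    have : (⟨a • m, by rw [ha]; exact zero_mem _⟩ : p.domain) = 0 := Subtype.ext ha
    rw [this, LinearPMap.map_zero]
  let r : M →ₗ.[A] M := LinearPMap.mkSpanSingleton' m n (by simpa using H)
  have hr : ∀ (a : A) (hh : a • m ∈ r.domain), r ⟨a • m, hh⟩ = a • n := fun a hh =>
    LinearPMap.mkSpanSingleton'_apply m n _ a hh
  have hrd : r.domain = Submodule.span A {m} := rfl
  have Hc : ∀ (x : p.domain) (y : r.domain), (x : M) = y → p x = r y := by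
    rintro ⟨x, hx⟩ ⟨y, hy⟩ hxy
    obtain ⟨a, rfl⟩ := Submodule.mem_span_singleton.1 (hrd ▸ hy)
    simp only at hxy
    subst hxy
    rw [hr, key]
  have hmr : m ∈ r.domain := Submodule.mem_span_singleton_self m
  refine ⟨p.sup r Hc, LinearPMap.left_le_sup _ _ _, ?_, ?_⟩
  · intro Y _ _ hY ι _ y b hb
    have : ∀ i, ∃ (d : p.domain) (a : A), (d : M) + a • m = b (y i) := by
      intro i
      have := hb i
      rw [LinearPMap.domain_sup, Submodule.mem_sup] at this
      obtain ⟨d, hd, e, he, hde⟩ := this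
      obtain ⟨a, rfl⟩ := Submodule.mem_span_singleton.1 (hrd ▸ he)
      exact ⟨⟨d, hd⟩, a, hde⟩
    choose d a hda using this
    have hbd : ∀ i, (b.coprod (LinearMap.toSpanSingleton A M m)) (y i, -a i) = d i := by
      intro i
      simp [← hda i]
    obtain ⟨c, hc, hc'⟩ := h (Y × A) inferInstance ι (fun i => (y i, - a i)) (0, 1)
      (b.coprod (LinearMap.toSpanSingleton A M m)) (fun i => by rw [hbd]; exact (d i).2)
      (by simp)
    refine ⟨c ∘ₗ LinearMap.inl A Y A, fun i => ?_⟩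
    have hmem : a i • m ∈ r.domain := r.domain.smul_mem _ hmr
    refine Eq.trans ?_ (LinearPMap.sup_apply Hc (d i) ⟨a i • m, hmem⟩ ⟨b (y i), hb i⟩ (hda i)).symm
    rw [hr]
    have h1 := hc i
    have h2 : (⟨(b.coprod (LinearMap.toSpanSingleton A M m)) (y i, -a i),
      by rw [hbd]; exact (d i).2⟩ : p.domain) = d i := Subtype.ext (hbd i)
    rw [h2] at h1
    rw [← h1, ← hc', ← map_smul, ← map_add]
    simp
  · refine ⟨(LinearPMap.right_le_sup _ _ Hc).1 hmr, ?_⟩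
    refine (LinearPMap.sup_apply Hc 0 ⟨m, hmr⟩ ⟨m, (LinearPMap.right_le_sup _ _ Hc).1 hmr⟩
      (by simp)).trans ?_
    rw [LinearPMap.map_zero, zero_add]
    have := hr 1 (by simpa using hmr)
    simpa using this

theorem pext_exists (rk : Submodule (Module.End A M) M → ℕ)
    (hrk : ∀ P P', IsPP M P → IsPP M P' → P < P' → rk P < rk P')
    (p : M →ₗ.[A] M) (hp : PPres p) (m : M) : ∃ n, PExt p m n := by
  classical
  let S : Set ℕ := {k | ∃ (Y : Type) (_ : AddCommGroup Y) (_ : Module A Y)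
    (_ : Module.FinitePresentation A Y) (ι : Type) (_ : Finite ι) (y : ι → Y) (z : Y)
    (b : Y →ₗ[A] M), (∀ i, b (y i) ∈ p.domain) ∧ b z = m ∧
      rk (ppSub (A := A) M ((Submodule.span A (Set.range y)).mkQ z)) = k}
  have hS : ∃ k, k ∈ S := ⟨_, A, inferInstance, inferInstance, inferInstance, Empty, inferInstance,
    Empty.elim, 1, LinearMap.toSpanSingleton A M m, fun i => i.elim, by simp, rfl⟩
  obtain ⟨Y, _, _, _, ι, _, y, z, b, hb, hz, hk⟩ := Nat.find_spec hS
  have hmin := fun k hk => Nat.find_min' hS (m := k) hk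
  rw [← hk] at hmin
  obtain ⟨c, hc⟩ := hp Y inferInstance ι y b hb
  refine ⟨c z, ?_⟩
  intro Y' _ _ hY' ι' _ y' z' b' hb' hz'
  obtain ⟨Y'', _, _, _, i, i', hii, hlift⟩ := exists_conj (A := A) (M := M) z z'
  obtain ⟨b'', hb1, hb2⟩ := hlift b b' (by rw [hz, hz'])
  let y'' : ι ⊕ ι' → Y'' := Sum.elim (i ∘ y) (i' ∘ y')
  have hb1' : ∀ x, b'' (i x) = b x := fun x => LinearMap.congr_fun hb1 x
  have hb2' : ∀ x, b'' (i' x) = b' x := fun x => LinearMap.congr_fun hb2 x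
  have hb'' : ∀ j, b'' (y'' j) ∈ p.domain := by
    rintro (j | j)
    · simpa [y'', hb1'] using hb j
    · simpa [y'', hb2'] using hb' j
  have hmin' := hmin _ ⟨Y'', inferInstance, inferInstance, inferInstance, ι ⊕ ι', inferInstance,
    y'', i z, b'', hb'', by rw [hb1', hz], rfl⟩
  have hle : ppSub (A := A) M ((Submodule.span A (Set.range y'')).mkQ (i z)) ≤
      ppSub (A := A) M ((Submodule.span A (Set.range y)).mkQ z) := by
    intro x hx
    rw [mem_ppSub_mk] at hx ⊢
    obtain ⟨d, hd, rfl⟩ := hx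
    exact ⟨d ∘ₗ i, fun j => hd (Sum.inl j), rfl⟩
  have hpp : ∀ (Y : Type) [AddCommGroup Y] [Module A Y] [Module.FinitePresentation A Y]
      (ι : Type) [Finite ι] (y : ι → Y) (z : Y),
      IsPP M (ppSub (A := A) M ((Submodule.span A (Set.range y)).mkQ z)) := by
    intro Y _ _ _ ι _ y z
    exact ⟨_, _, _, fp_quot _ (Submodule.fg_span (Set.finite_range y)), _, rfl⟩
  have heq := eq_of_le_of_not_lt hle
    (fun hlt => absurd (hrk _ _ (hpp _ _ _ _) (hpp _ _ _ _) hlt) (not_lt.2 hmin'))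
  obtain ⟨c'', hc''⟩ := hp Y'' inferInstance (ι ⊕ ι') y'' b'' hb''
  have hc1 : ∀ j, c'' (i (y j)) = c (y j) := by
    intro j
    have h1 := hc'' (Sum.inl j)
    rw [hc j]
    refine h1.trans ?_
    congr 1
    exact Subtype.ext (hb1' _)
  have hc2 : ∀ j, c'' (i' (y' j)) = p ⟨b' (y' j), hb' j⟩ := by
    intro j
    have h1 := hc'' (Sum.inr j)
    refine h1.trans ?_
    congr 1
    exact Subtype.ext (hb2' _)
  have hmem : c z - c'' (i z) ∈ ppSub (A := A) M ((Submodule.span A (Set.range y'')).mkQ (i z)) := by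
    rw [heq, mem_ppSub_mk]
    exact ⟨c - c'' ∘ₗ i, fun j => by simp [hc1], by simp⟩
  rw [mem_ppSub_mk] at hmem
  obtain ⟨d, hd, hdz⟩ := hmem
  refine ⟨(c'' + d) ∘ₗ i', fun j => ?_, ?_⟩
  · have := hd (Sum.inr j)
    simp only [y'', Sum.elim_inr, Function.comp_apply] at this
    simp [hc2, this]
  · simp [← hii, hdz]

theorem ppres_total (rk : Submodule (Module.End A M) M → ℕ)
    (hrk : ∀ P P', IsPP M P → IsPP M P' → P < P' → rk P < rk P') (m n : M)
    (h : ∀ (Y : Type) [AddCommGroup Y] [Module A Y], Module.FinitePresentation A Y →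
      ∀ y : Y, m ∈ ppSub (A := A) M y → n ∈ ppSub (A := A) M y) :
    ∃ e : Module.End A M, e m = n := by
  have h0 : PExt (⊥ : M →ₗ.[A] M) m n := by
    intro Y _ _ hY ι _ y z b hb hz
    have := h _ (fp_quot (A := A) _ (Submodule.fg_span (Set.finite_range y)))
      ((Submodule.span A (Set.range y)).mkQ z)
    rw [mem_ppSub_mk, mem_ppSub_mk] at this
    obtain ⟨c, hc, hc'⟩ := this ⟨b, fun i => (Submodule.mem_bot A).1 (hb i), hz⟩
    refine ⟨c, fun i => ?_, hc'⟩
    rw [hc]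
    rfl
  obtain ⟨p, -, hp, hpm, hpn⟩ := pext_extend _ m n h0
  obtain ⟨q, hpq, hq⟩ := zorn_le_nonempty₀ {p : M →ₗ.[A] M | PPres p} (by
    intro c hc hch p₀ hp₀
    refine ⟨LinearPMap.sSup c hch.directedOn, ?_, fun z hz => LinearPMap.le_sSup _ hz⟩
    intro Y _ _ hY ι _ y b hb
    have : ∀ i, ∃ f : c, b (y i) ∈ f.1.domain := by
      intro i
      obtain ⟨f, hf, hf'⟩ := (LinearPMap.mem_domain_sSup_iff ⟨p₀, hp₀⟩ hch.directedOn).1 (hb i)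
      exact ⟨⟨f, hf⟩, hf'⟩
    choose f hf using this
    have : Nonempty c := ⟨⟨p₀, hp₀⟩⟩
    obtain ⟨g, hg⟩ := (directedOn_iff_directed.1 hch.directedOn).finite_le f
    obtain ⟨d, hd⟩ := hc g.2 Y hY ι y b (fun i => (hg i).1 (hf i))
    refine ⟨d, fun i => ?_⟩
    rw [hd]
    exact (LinearPMap.le_sSup hch.directedOn g.2).2 rfl) p hp
  have htop : ∀ x, x ∈ q.domain := by
    intro x
    obtain ⟨x', hx'⟩ := pext_exists rk hrk q hq.1 x
    obtain ⟨q', hqq', hq', hx, -⟩ := pext_extend q x x' hx'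
    exact (hq.2 hq' hqq').1 hx
  refine ⟨q.toFun ∘ₗ (LinearMap.id.codRestrict q.domain htop), ?_⟩
  rw [← hpn]
  exact (hpq.2 rfl).symm

end pp
section endofin

variable {A : Type} [Ring A]
variable (χ : (X : Type) → [AddCommGroup X] → [Module A X] → ℕ)

/-- The rank of a pointed module. -/
noncomputable def cRank {Y : Type} [AddCommGroup Y] [Module A Y] (y : Y) : ℕ :=
  χ Y - χ (Y ⧸ LinearMap.range (LinearMap.toSpanSingleton A Y y))

variable {χ}

theorem cRank_le_A (hχ : IsSubadditive A χ) {Y : Type} [AddCommGroup Y] [Module A Y]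
    [Module.FinitePresentation A Y] (y : Y) : cRank χ y ≤ χ A := by
  have := chi_range hχ (LinearMap.toSpanSingleton A Y y)
  unfold cRank
  omega

theorem comp_toSpan {Y W : Type} [AddCommGroup Y] [Module A Y] [AddCommGroup W] [Module A W]
    (h : Y →ₗ[A] W) (y : Y) :
    h ∘ₗ LinearMap.toSpanSingleton A Y y = LinearMap.toSpanSingleton A W (h y) := by
  ext; simp

theorem cRank_map (hχ : IsSubadditive A χ) {Y W : Type} [AddCommGroup Y] [Module A Y]
    [AddCommGroup W] [Module A W]
    [Module.FinitePresentation A Y] [Module.FinitePresentation A W] (h : Y →ₗ[A] W) (y : Y) :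
    cRank χ (h y) ≤ cRank χ y ∧ (cRank χ y ≤ cRank χ (h y) →
      InSig χ (h.prod (LinearMap.range (LinearMap.toSpanSingleton A Y y)).mkQ)) := by
  have := fp_quot_range (LinearMap.toSpanSingleton A Y y)
  have := fp_quot_range (LinearMap.toSpanSingleton A W (h y))
  have hex := exact_cancel (LinearMap.toSpanSingleton A Y y) h
  rw [comp_toSpan] at hex
  obtain ⟨g, hg, hg'⟩ := hex
  rw [inSig_iff hχ _ _ hg hg', chi_prod hχ]
  have h1 := chi_exact hχ _ _ hg hg'
  rw [chi_prod hχ] at h1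
  have h2 := chi_surj hχ _ (Submodule.mkQ_surjective
    (LinearMap.range (LinearMap.toSpanSingleton A Y y)))
  have h3 := chi_surj hχ _ (Submodule.mkQ_surjective
    (LinearMap.range (LinearMap.toSpanSingleton A W (h y))))
  unfold cRank
  omega

variable {M : Type} [AddCommGroup M] [Module A M]

theorem ppSub_map {Y W : Type} [AddCommGroup Y] [Module A Y]
    [AddCommGroup W] [Module A W] (h : Y →ₗ[A] W) (y : Y) :
    ppSub (A := A) M (h y) ≤ ppSub (A := A) M y := by
  rintro _ ⟨k, rfl⟩
  exact ⟨k ∘ₗ h, rfl⟩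

theorem ppSub_le (hχ : IsSubadditive A χ) (hM : SigInj χ M) {Y W : Type} [AddCommGroup Y]
    [Module A Y] [AddCommGroup W] [Module A W]
    [Module.FinitePresentation A Y] [Module.FinitePresentation A W] (h : Y →ₗ[A] W) (y : Y)
    (hr : cRank χ y ≤ cRank χ (h y)) : ppSub (A := A) M y ≤ ppSub (A := A) M (h y) := by
  rintro _ ⟨k, rfl⟩
  have := fp_quot_range (LinearMap.toSpanSingleton A Y y)
  obtain ⟨b, hb⟩ := hM _ _ inferInstance inferInstance _ ((cRank_map hχ h y).2 hr) k
  refine ⟨b ∘ₗ LinearMap.inl A _ _, ?_⟩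
  rw [← hb]
  have : (LinearMap.range (LinearMap.toSpanSingleton A Y y)).mkQ y = 0 := by
    rw [Submodule.mkQ_apply, Submodule.Quotient.mk_eq_zero]
    exact ⟨1, by simp⟩
  simp only [LinearMap.comp_apply, LinearMap.prod_apply, Function.prod_apply, this,
    LinearMap.inl_apply]

variable (χ M) in
/-- The rank of a pp-definable subgroup. -/
noncomputable def rkPP (P : Submodule (Module.End A M) M) : ℕ :=
  sInf {c | ∃ (Y : Type) (_ : AddCommGroup Y) (_ : Module A Y)
    (_ : Module.FinitePresentation A Y) (y : Y), ppSub (A := A) M y = P ∧ cRank χ y = c}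

theorem rkPP_le {Y : Type} [AddCommGroup Y] [Module A Y]
    [Module.FinitePresentation A Y] (y : Y) : rkPP χ M (ppSub (A := A) M y) ≤ cRank χ y :=
  Nat.sInf_le ⟨Y, _, _, ‹_›, y, rfl, rfl⟩

theorem rkPP_spec (P : Submodule (Module.End A M) M) (hP : IsPP M P) :
    ∃ (Y : Type) (_ : AddCommGroup Y) (_ : Module A Y)
    (_ : Module.FinitePresentation A Y) (y : Y), ppSub (A := A) M y = P ∧
      cRank χ y = rkPP χ M P := by
  obtain ⟨Y, _, _, hY, y, hy⟩ := hP
  exact Nat.sInf_mem (s := {c | ∃ (Y : Type) (_ : AddCommGroup Y) (_ : Module A Y)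
    (_ : Module.FinitePresentation A Y) (y : Y), ppSub (A := A) M y = P ∧ cRank χ y = c})
    ⟨_, Y, _, _, hY, y, hy, rfl⟩

theorem rkPP_bound (hχ : IsSubadditive A χ) (P : Submodule (Module.End A M) M) (hP : IsPP M P) :
    rkPP χ M P ≤ χ A := by
  obtain ⟨Y, _, _, hY, y, hy, hr⟩ := rkPP_spec (χ := χ) P hP
  rw [← hr]
  exact cRank_le_A hχ y

theorem rkPP_strict (hχ : IsSubadditive A χ) (hM : SigInj χ M)
    (P P' : Submodule (Module.End A M) M) (hP : IsPP M P) (hP' : IsPP M P') (h : P < P') :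
    rkPP χ M P < rkPP χ M P' := by
  obtain ⟨Y, _, _, hY, y, hy, hr⟩ := rkPP_spec (χ := χ) P hP
  obtain ⟨Y', _, _, hY', y', hy', hr'⟩ := rkPP_spec (χ := χ) P' hP'
  obtain ⟨Y'', _, _, _, i, i', hii, hlift⟩ := exists_conj (A := A) (M := M) y y'
  have hi : ppSub (A := A) M (i' y') = P := by
    apply le_antisymm
    · rw [← hii, ← hy]
      exact ppSub_map i y
    · intro m hm
      have hm' := h.le hm
      rw [← hy] at hm
      rw [← hy'] at hm'
      obtain ⟨k, hk⟩ := hm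
      obtain ⟨k', hk'⟩ := hm'
      obtain ⟨l, hl, -⟩ := hlift k k' (hk.trans hk'.symm)
      refine ⟨l, ?_⟩
      rw [← hii, ← hk, ← hl]
      rfl
  by_contra hlt
  have h1 := rkPP_le (χ := χ) (M := M) (i' y')
  rw [hi] at h1
  have h2 := ppSub_le hχ hM i' y' (by omega)
  rw [hi, hy'] at h2
  exact absurd h (not_lt_of_ge h2)

theorem isPP_span (hχ : IsSubadditive A χ) (hM : SigInj χ M) (m : M) :
    IsPP M (Submodule.span (Module.End A M) {m}) := by
  classical
  have hS : ∃ k, ∃ (Y : Type) (_ : AddCommGroup Y) (_ : Module A Y)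
    (_ : Module.FinitePresentation A Y) (y : Y), m ∈ ppSub (A := A) M y ∧ cRank χ y = k :=
    ⟨_, A, inferInstance, inferInstance, inferInstance, 1,
      ⟨LinearMap.toSpanSingleton A M m, by simp⟩, rfl⟩
  obtain ⟨Y, _, _, hY, y, hy, hk⟩ := Nat.find_spec hS
  have hmin := fun k hk => Nat.find_min' hS (m := k) hk
  rw [← hk] at hmin
  refine ⟨Y, _, _, hY, y, le_antisymm ?_ ?_⟩
  · intro n hn
    obtain ⟨e, he⟩ := ppres_total (rkPP χ M) (rkPP_strict hχ hM) m n (by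
      intro Y' _ _ hY' y' hm'
      obtain ⟨Y'', _, _, hY'', i, i', hii, hlift⟩ := exists_conj (A := A) (M := M) y y'
      obtain ⟨k, hk⟩ := hy
      obtain ⟨k', hk'⟩ := hm'
      obtain ⟨l, hl, -⟩ := hlift k k' (hk.trans hk'.symm)
      have h1 := hmin _ ⟨Y'', _, _, hY'', i y, ⟨l, by rw [← hk, ← hl]; rfl⟩, rfl⟩
      have h2 := ppSub_le hχ hM i y h1 hn
      rw [hii] at h2
      exact ppSub_map i' y' h2)
    exact Submodule.mem_span_singleton.2 ⟨e, he⟩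
  · rw [Submodule.span_singleton_le_iff_mem]
    exact hy

theorem isPP_sup (P P' : Submodule (Module.End A M) M) (hP : IsPP M P) (hP' : IsPP M P') :
    IsPP M (P ⊔ P') := by
  obtain ⟨Y, _, _, hY, y, rfl⟩ := hP
  obtain ⟨Y', _, _, hY', y', rfl⟩ := hP'
  refine ⟨Y × Y', inferInstance, inferInstance, inferInstance, (y, y'), le_antisymm ?_ ?_⟩
  · rintro _ ⟨h, rfl⟩
    rw [Submodule.mem_sup]
    refine ⟨_, ⟨h ∘ₗ LinearMap.inl A _ _, rfl⟩, _, ⟨h ∘ₗ LinearMap.inr A _ _, rfl⟩, ?_⟩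
    simp [← map_add]
  · refine sup_le ?_ ?_
    · rintro _ ⟨h, rfl⟩
      exact ⟨h ∘ₗ LinearMap.fst A _ _, rfl⟩
    · rintro _ ⟨h, rfl⟩
      exact ⟨h ∘ₗ LinearMap.snd A _ _, rfl⟩

theorem isPP_bot : IsPP M (⊥ : Submodule (Module.End A M) M) := by
  refine ⟨PUnit, inferInstance, inferInstance, inferInstance, PUnit.unit, ?_⟩
  rw [eq_bot_iff]
  rintro _ ⟨h, rfl⟩
  exact (Submodule.mem_bot _).2 (map_zero h)

theorem isPP_all (hχ : IsSubadditive A χ) (hM : SigInj χ M)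
    (N : Submodule (Module.End A M) M) : IsPP M N := by
  classical
  by_contra hN
  have : ∀ k, ∃ P, IsPP M P ∧ P ≤ N ∧ k ≤ rkPP χ M P := by
    intro k
    induction k with
    | zero => exact ⟨⊥, isPP_bot, bot_le, Nat.zero_le _⟩
    | succ k ih =>
      obtain ⟨P, hP, hPN, hk⟩ := ih
      have hlt : P < N := lt_of_le_of_ne hPN (fun h => hN (h ▸ hP))
      obtain ⟨m, hm, hm'⟩ := SetLike.exists_of_lt hlt
      have hP' := isPP_sup _ _ hP (isPP_span hχ hM m)
      refine ⟨_, hP', sup_le hPN ((Submodule.span_singleton_le_iff_mem _ _).2 hm), ?_⟩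
      have := rkPP_strict hχ hM _ _ hP hP' (lt_of_le_of_ne le_sup_left (fun h => hm' (by
        rw [h]
        exact Submodule.mem_sup_right (Submodule.mem_span_singleton_self m))))
      omega
  obtain ⟨P, hP, -, hk⟩ := this (χ A + 1)
  have := rkPP_bound hχ P hP
  omega

theorem endofinite_of_sigInj (hχ : IsSubadditive A χ) (hM : SigInj χ M) : IsEndofinite A M := by
  have hs : StrictMono (rkPP χ M) := fun P P' h =>
    rkPP_strict hχ hM P P' (isPP_all hχ hM P) (isPP_all hχ hM P') h
  have hs' : StrictAnti (fun P => χ A - rkPP χ M P) := fun P P' h => by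
    have h1 := hs h
    have h2 := rkPP_bound hχ P' (isPP_all hχ hM P')
    show χ A - rkPP χ M P' < χ A - rkPP χ M P
    omega
  refine isFiniteLength_iff_isNoetherian_isArtinian.2 ⟨?_, ?_⟩
  · exact isNoetherian_iff'.2 hs'.wellFoundedGT
  · exact hs.wellFoundedLT

end endofin
section final

variable {A : Type} [Ring A]

theorem compLength_eq (R : Type) [Ring R] (M : Type) [AddCommGroup M] [Module R M]
    (h : IsFiniteLength R M) : (compLength R M : ℕ∞) = Module.length R M := by
  have h' := isFiniteLength_iff_exists_compositionSeries.1 h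
  unfold compLength
  rw [dif_pos h']
  exact Module.length_compositionSeries _ h'.choose_spec.1 h'.choose_spec.2

variable {M : Type} [AddCommGroup M] [Module A M]

theorem hom_finite (hM : IsEndofinite A M) (X : Type) [AddCommGroup X] [Module A X]
    [Module.Finite A X] : IsFiniteLength (Module.End A M) (X →ₗ[A] M) := by
  obtain ⟨n, s, hs⟩ := Module.Finite.exists_fin (R := A) (M := X)
  obtain ⟨_, _⟩ := isFiniteLength_iff_isNoetherian_isArtinian.1 hM
  let φ : (X →ₗ[A] M) →ₗ[Module.End A M] (Fin n → M) :=
    { toFun := fun f i => f (s i), map_add' := fun _ _ => rfl, map_smul' := fun _ _ => rfl }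
  have hφ : Function.Injective φ := by
    intro f g h
    refine LinearMap.ext_on_range hs fun i => congrFun h i
  exact isFiniteLength_iff_isNoetherian_isArtinian.2
    ⟨isNoetherian_of_injective φ hφ, isArtinian_of_injective φ hφ⟩

theorem chiMod_iff (hM : IsEndofinite A M) {X Y Z : Type} [AddCommGroup X] [Module A X]
    [AddCommGroup Y] [Module A Y] [AddCommGroup Z] [Module A Z]
    [Module.Finite A X] [Module.Finite A Y] [Module.Finite A Z]
    (f : X →ₗ[A] Y) (g : Y →ₗ[A] Z) (h : Function.Exact f g) (hg : Function.Surjective g) :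
    chiMod A M X + chiMod A M Z = chiMod A M Y ↔
      ∀ a : X →ₗ[A] M, ∃ b : Y →ₗ[A] M, b ∘ₗ f = a := by
  let φ : (Y →ₗ[A] M) →ₗ[Module.End A M] (X →ₗ[A] M) :=
    { toFun := fun b => b ∘ₗ f, map_add' := fun _ _ => rfl, map_smul' := fun _ _ => rfl }
  let ψ : (Z →ₗ[A] M) →ₗ[Module.End A M] (Y →ₗ[A] M) :=
    { toFun := fun b => b ∘ₗ g, map_add' := fun _ _ => rfl, map_smul' := fun _ _ => rfl }
  have hψ : Function.Injective ψ := by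
    intro b b' hb
    ext z
    obtain ⟨y, rfl⟩ := hg z
    exact LinearMap.congr_fun hb y
  have hex : Function.Exact ψ φ := by
    intro b
    constructor
    · intro hb
      obtain ⟨b', hb'⟩ := exists_factor g hg b (fun y hy => by
        obtain ⟨x, rfl⟩ := (h y).1 hy
        exact LinearMap.congr_fun hb x)
      exact ⟨b', LinearMap.ext hb'⟩
    · rintro ⟨c, rfl⟩
      ext x
      show c (g (f x)) = 0
      rw [(h (f x)).2 ⟨x, rfl⟩, map_zero]
  have hex' : Function.Exact ψ φ.rangeRestrict := by
    intro b
    rw [← hex b]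
    exact Subtype.ext_iff
  have hlen := Module.length_eq_add_of_exact ψ φ.rangeRestrict hψ φ.surjective_rangeRestrict hex'
  have hX := hom_finite hM X
  have eX := compLength_eq _ _ hX
  have eY := compLength_eq _ _ (hom_finite hM Y)
  have eZ := compLength_eq _ _ (hom_finite hM Z)
  obtain ⟨_, _⟩ := isFiniteLength_iff_isNoetherian_isArtinian.1 hX
  rw [← eY, ← eZ] at hlen
  have hsurj : (∀ a : X →ₗ[A] M, ∃ b : Y →ₗ[A] M, b ∘ₗ f = a) ↔ LinearMap.range φ = ⊤ := by
    rw [LinearMap.range_eq_top]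
    rfl
  rw [hsurj]
  unfold chiMod
  constructor
  · intro he
    by_contra hne
    have hlt := Submodule.length_lt hne
    have h2 : Module.length (Module.End A M) (LinearMap.range φ) ≠ ⊤ := ne_top_of_lt hlt
    obtain ⟨k, hk⟩ := ENat.ne_top_iff_exists.1 h2
    rw [← eX, ← hk] at hlt
    rw [← hk] at hlen
    have h3 : k < compLength (Module.End A M) (X →ₗ[A] M) := by exact_mod_cast hlt
    have h4 : compLength (Module.End A M) (Y →ₗ[A] M) =
      compLength (Module.End A M) (Z →ₗ[A] M) + k := by exact_mod_cast hlen
    omega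
  · intro ht
    rw [ht, Module.length_top, ← eX] at hlen
    have h4 : compLength (Module.End A M) (Y →ₗ[A] M) =
      compLength (Module.End A M) (Z →ₗ[A] M) + compLength (Module.End A M) (X →ₗ[A] M) := by
      exact_mod_cast hlen
    omega

variable {χ : (X : Type) → [AddCommGroup X] → [Module A X] → ℕ}

theorem exists_cogen (hχ : IsSubadditive A χ) :
    ∃ (M : Type) (_ : AddCommGroup M) (_ : Module A M), SigInj χ M ∧
      ∀ (X Y : Type) [AddCommGroup X] [Module A X] [AddCommGroup Y] [Module A Y],
        Module.FinitePresentation A X → Module.FinitePresentation A Y →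
        ∀ f : X →ₗ[A] Y, (∀ a : X →ₗ[A] M, ∃ b : Y →ₗ[A] M, b ∘ₗ f = a) → InSig χ f := by
  classical
  choose N i1 i2 u hu hN using fun s : {s : SmallMap A // ¬ InSig χ s.f} =>
    exists_sigInj hχ s.1.src
  refine ⟨∀ s, N s, inferInstance, inferInstance, ?_, ?_⟩
  · intro X Y _ _ _ _ hX hY f hf a
    choose b hb using fun s => hN s X Y hX hY f hf (LinearMap.proj s ∘ₗ a)
    exact ⟨LinearMap.pi b, by ext x s; exact LinearMap.congr_fun (hb s) x⟩
  · intro X Y _ _ _ _ hX hY f hf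
    obtain ⟨s, eX, eY, hs, hc⟩ := exists_smallMap hχ f
    by_contra hn
    rw [← hs] at hn
    obtain ⟨b, hb⟩ := hf (LinearMap.single A N ⟨s, hn⟩ ∘ₗ u ⟨s, hn⟩ ∘ₗ eX.toLinearMap)
    refine hn (hu ⟨s, hn⟩ s.tgt inferInstance s.f
      ((LinearMap.proj (R := A) (φ := N) ⟨s, hn⟩) ∘ₗ b ∘ₗ eY.symm.toLinearMap) ?_)
    refine LinearMap.ext fun x => ?_
    obtain ⟨x, rfl⟩ := eX.surjective x
    have := congrFun (LinearMap.congr_fun hb x) ⟨s, hn⟩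
    simpa [hc] using this

end final

/-- If the finitely presented `A`-modules form an abelian category, then for
every subadditive function `χ` there is an endofinite `A`-module `M` with
`Adloc(χ) = Adloc(χ_M)`. -/
theorem statement3 (A : Type) [Ring A] (hA : FpAbelian A)
    (χ : (X : Type) → [AddCommGroup X] → [Module A X] → ℕ) (hχ : IsSubadditive A χ) :
    ∃ (M : Type) (_ : AddCommGroup M) (_ : Module A M),
      IsEndofinite A M ∧
      ∀ (Z : Type) [AddCommGroup Z] [Module A Z],
        MemAdloc A χ Z ↔ MemAdloc A (chiMod A M) Z := by
  obtain ⟨M, _, _, hM, hM'⟩ := exists_cogen hχ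
  have hE := endofinite_of_sigInj hχ hM
  refine ⟨M, _, _, hE, fun Z _ _ => ?_⟩
  unfold MemAdloc
  refine and_congr_right fun hZ => ?_
  have key : ∀ (X Y : Type) [AddCommGroup X] [Module A X] [AddCommGroup Y] [Module A Y],
      Module.FinitePresentation A X → Module.FinitePresentation A Y →
      ∀ (f : X →ₗ[A] Y) (g : Y →ₗ[A] Z), Function.Exact f g → Function.Surjective g →
      (χ X + χ Z = χ Y ↔ chiMod A M X + chiMod A M Z = chiMod A M Y) := by
    intro X Y _ _ _ _ hX hY f g h hg
    rw [chiMod_iff hE f g h hg, ← inSig_iff hχ f g h hg]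
    exact ⟨fun hf => hM X Y hX hY f hf, hM' X Y hX hY f⟩
  constructor
  · intro H X Y _ _ _ _ hX hY f g hf h hg
    exact (key X Y hX hY f g h hg).1 (H X Y hX hY f g hf h hg)
  · intro H X Y _ _ _ _ hX hY f g hf h hg
    exact (key X Y hX hY f g h hg).2 (H X Y hX hY f g hf h hg)
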